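/- With $\widetilde{k}_j(\theta) = \frac{\sin(j\pi/6)}{\sin(j\pi/6+\theta)}$ for $j=1,\dots,5$, one has $4\pi\int_{0}^{\pi/6} \frac{\sin^2\theta}{\big(\widetilde{k}_1(\theta)\cdots\widetilde{k}_5(\theta)\big)^2}\cdot\frac{\widetilde{k}_1(\theta)^2+\widetilde{k}_5(\theta)^2}{2}\,d\theta = \frac{\pi^2}{36}+\frac{11\sqrt{3}}{480}\pi$. -/

import Mathlib

/-!
By the addition formulas the factors of index `1, 5` and of index `2, 4` pair up, and away from
`θ = π/6` the integrand collapses to the trigonometric polynomial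
`(1 - u²)(1 + 2u)²(2 - u) / 36` with `u = cos 2θ` (`integrand_eq`). An explicit primitive
(`hasDerivAt_primitive`) and the fundamental theorem of calculus give the value. At the endpoint
`θ = π/6` one has `sin (5π/6 + θ) = 0`, so the quotients take junk values there; the integral
does not see this single point.
-/

open Real MeasureTheory

/-- The contraction factor `k̃_j(θ) = sin(jπ/6)/sin(jπ/6+θ)` of the focal map. -/
noncomputable def ktil (j : ℕ) (θ : ℝ) : ℝ :=
  Real.sin ((j : ℝ) * π / 6) / Real.sin ((j : ℝ) * π / 6 + θ)

/-- A primitive of `(1 - u²)(1 + 2u)²(2 - u) / 36`, where `u = cos 2θ`. -/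
noncomputable def primitive (θ : ℝ) : ℝ :=
  (3 / 2 * θ + sin (2 * θ) ^ 3 / 2 + 2 / 5 * sin (2 * θ) ^ 5 - sin (2 * θ) * cos (2 * θ) / 2
    - sin (2 * θ) * cos (2 * θ) * (1 - 2 * sin (2 * θ) ^ 2) / 4) / 36

lemma hasDerivAt_primitive (θ : ℝ) :
    HasDerivAt primitive
      ((1 - cos (2 * θ) ^ 2) * (1 + 2 * cos (2 * θ)) ^ 2 * (2 - cos (2 * θ)) / 36) θ := by
  have h2 : HasDerivAt (fun x : ℝ => 2 * x) 2 θ := by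
    simpa using (hasDerivAt_id θ).const_mul 2
  have hs : HasDerivAt (fun x : ℝ => sin (2 * x)) (cos (2 * θ) * 2) θ := h2.sin
  have hc : HasDerivAt (fun x : ℝ => cos (2 * x)) (-sin (2 * θ) * 2) θ := h2.cos
  have h := ((((((hasDerivAt_id θ).const_mul (3 / 2)).add ((hs.pow 3).div_const 2)).add
    ((hs.pow 5).const_mul (2 / 5))).sub ((hs.mul hc).div_const 2)).sub
    (((hs.mul hc).mul (((hs.pow 2).const_mul 2).const_sub 1)).div_const 4)).div_const 36
  refine h.congr_deriv ?_
  have e2 : sin (2 * θ) ^ 2 = 1 - cos (2 * θ) ^ 2 := sin_sq _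
  have e4 : sin (2 * θ) ^ 4 = (1 - cos (2 * θ) ^ 2) ^ 2 := by rw [← e2]; ring
  simp only [Pi.mul_apply, Pi.pow_apply]
  push_cast
  ring_nf
  ring_nf at e2 e4
  simp only [e2, e4]
  ring

lemma integrand_eq {θ : ℝ} (h0 : 0 < θ) (h1 : θ < π / 6) :
    (sin θ)^2 / (ktil 1 θ * ktil 2 θ * ktil 3 θ * ktil 4 θ * ktil 5 θ)^2
        * (((ktil 1 θ)^2 + (ktil 5 θ)^2) / 2)
      = (1 - cos (2 * θ) ^ 2) * (1 + 2 * cos (2 * θ)) ^ 2 * (2 - cos (2 * θ)) / 36 := by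
  have hpi := pi_pos
  have s1 : sin (((1 : ℕ) : ℝ) * π / 6) = 1 / 2 := by
    rw [← sin_pi_div_six]; congr 1; push_cast; ring
  have s2 : sin (((2 : ℕ) : ℝ) * π / 6) = √3 / 2 := by
    rw [← sin_pi_div_three]; congr 1; push_cast; ring
  have s3 : sin (((3 : ℕ) : ℝ) * π / 6) = 1 := by
    rw [← sin_pi_div_two]; congr 1; push_cast; ring
  have s4 : sin (((4 : ℕ) : ℝ) * π / 6) = √3 / 2 := by
    rw [← sin_pi_div_three, ← sin_pi_sub]; congr 1; push_cast; ring
  have s5 : sin (((5 : ℕ) : ℝ) * π / 6) = 1 / 2 := by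
    rw [← sin_pi_div_six, ← sin_pi_sub]; congr 1; push_cast; ring
  have pos : ∀ x : ℝ, 0 < x → x < π → sin x ≠ 0 := fun x a b => (sin_pos_of_pos_of_lt_pi a b).ne'
  have n1 : sin (((1 : ℕ) : ℝ) * π / 6 + θ) ≠ 0 := by
    apply pos <;> push_cast <;> linarith
  have n2 : sin (((2 : ℕ) : ℝ) * π / 6 + θ) ≠ 0 := by
    apply pos <;> push_cast <;> linarith
  have n3 : sin (((3 : ℕ) : ℝ) * π / 6 + θ) ≠ 0 := by
    apply pos <;> push_cast <;> linarith
  have n4 : sin (((4 : ℕ) : ℝ) * π / 6 + θ) ≠ 0 := by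
    apply pos <;> push_cast <;> linarith
  have n5 : sin (((5 : ℕ) : ℝ) * π / 6 + θ) ≠ 0 := by
    apply pos <;> push_cast <;> linarith
  have a1 : sin (((1 : ℕ) : ℝ) * π / 6 + θ) = (cos θ + √3 * sin θ) / 2 := by
    rw [show ((1 : ℕ) : ℝ) * π / 6 + θ = π / 6 + θ by push_cast; ring, sin_add, sin_pi_div_six,
      cos_pi_div_six]; ring
  have a2 : sin (((2 : ℕ) : ℝ) * π / 6 + θ) = (√3 * cos θ + sin θ) / 2 := by
    rw [show ((2 : ℕ) : ℝ) * π / 6 + θ = π / 3 + θ by push_cast; ring, sin_add, sin_pi_div_three,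
      cos_pi_div_three]; ring
  have a3 : sin (((3 : ℕ) : ℝ) * π / 6 + θ) = cos θ := by
    rw [show ((3 : ℕ) : ℝ) * π / 6 + θ = θ + π / 2 by push_cast; ring, sin_add_pi_div_two]
  have a4 : sin (((4 : ℕ) : ℝ) * π / 6 + θ) = (√3 * cos θ - sin θ) / 2 := by
    rw [show ((4 : ℕ) : ℝ) * π / 6 + θ = π - (π / 3 - θ) by push_cast; ring, sin_pi_sub, sin_sub,
      sin_pi_div_three, cos_pi_div_three]; ring
  have a5 : sin (((5 : ℕ) : ℝ) * π / 6 + θ) = (cos θ - √3 * sin θ) / 2 := by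
    rw [show ((5 : ℕ) : ℝ) * π / 6 + θ = π - (π / 6 - θ) by push_cast; ring, sin_pi_sub, sin_sub,
      sin_pi_div_six, cos_pi_div_six]; ring
  have r3 : √3 ^ 2 = 3 := sq_sqrt (by norm_num)
  -- Clearing the quotients, with `A, …, E` standing for `sin (jπ/6 + θ)`, `j = 1, …, 5`.
  have key : ∀ A B C D E s : ℝ, A ≠ 0 → B ≠ 0 → C ≠ 0 → D ≠ 0 → E ≠ 0 →
      s ^ 2 / ((1 / 2) / A * (√3 / 2 / B) * (1 / C) * (√3 / 2 / D) * ((1 / 2) / E)) ^ 2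
        * ((((1 / 2) / A) ^ 2 + ((1 / 2) / E) ^ 2) / 2)
      = 32 / 9 * s ^ 2 * (B * D) ^ 2 * C ^ 2 * (A ^ 2 + E ^ 2) := by
    intro A B C D E s hA hB hC hD hE
    have : (1 / 2) / A * (√3 / 2 / B) * (1 / C) * (√3 / 2 / D) * ((1 / 2) / E)
        = 3 / 16 / (A * B * C * D * E) := by
      field_simp
      rw [r3]; norm_num
    rw [this]
    field_simp
    ring
  simp only [ktil, s1, s2, s3, s4, s5]
  rw [key _ _ _ _ _ _ n1 n2 n3 n4 n5, a1, a2, a3, a4, a5]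
  have hBD : (√3 * cos θ + sin θ) / 2 * ((√3 * cos θ - sin θ) / 2)
      = (3 * cos θ ^ 2 - sin θ ^ 2) / 4 := by
    linear_combination cos θ ^ 2 / 4 * r3
  have hAE : ((cos θ + √3 * sin θ) / 2) ^ 2 + ((cos θ - √3 * sin θ) / 2) ^ 2
      = (cos θ ^ 2 + 3 * sin θ ^ 2) / 2 := by
    linear_combination sin θ ^ 2 / 2 * r3
  rw [hBD, hAE, cos_two_mul, sin_sq]
  ring

/-- `4π ∫_0^{π/6} sin²θ/(k̃₁⋯k̃₅)² · (k̃₁²+k̃₅²)/2 dθ = π²/36 + (11√3/480)π`. -/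
theorem stmt9 :
    4 * π * (∫ θ in (0:ℝ)..(π/6),
      (sin θ)^2 / (ktil 1 θ * ktil 2 θ * ktil 3 θ * ktil 4 θ * ktil 5 θ)^2
        * (((ktil 1 θ)^2 + (ktil 5 θ)^2) / 2))
    = π^2/36 + 11 * Real.sqrt 3 / 480 * π := by
  have hcongr : (∫ θ in (0:ℝ)..(π/6),
      (sin θ)^2 / (ktil 1 θ * ktil 2 θ * ktil 3 θ * ktil 4 θ * ktil 5 θ)^2
        * (((ktil 1 θ)^2 + (ktil 5 θ)^2) / 2)) = ∫ θ in (0:ℝ)..(π/6),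
      (1 - cos (2 * θ) ^ 2) * (1 + 2 * cos (2 * θ)) ^ 2 * (2 - cos (2 * θ)) / 36 := by
    have hle : (0:ℝ) ≤ π / 6 := by positivity
    rw [intervalIntegral.integral_of_le hle, intervalIntegral.integral_of_le hle,
      integral_Ioc_eq_integral_Ioo, integral_Ioc_eq_integral_Ioo]
    exact setIntegral_congr_fun measurableSet_Ioo fun θ hθ => integrand_eq hθ.1 hθ.2
  have hint := intervalIntegral.integral_eq_sub_of_hasDerivAt (a := 0) (b := π / 6)
    (fun θ _ => hasDerivAt_primitive θ)
    ((by fun_prop : Continuous fun θ : ℝ => (1 - cos (2 * θ) ^ 2) * (1 + 2 * cos (2 * θ)) ^ 2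
      * (2 - cos (2 * θ)) / 36).intervalIntegrable _ _)
  rw [hcongr, hint]
  have r3 : √3 ^ 2 = 3 := sq_sqrt (by norm_num)
  have r3' : √3 ^ 3 = 3 * √3 := by rw [pow_succ, r3]
  have r5 : √3 ^ 5 = 9 * √3 := by rw [pow_succ, show √3 ^ 4 = (√3 ^ 2) ^ 2 by ring, r3]; norm_num
  simp only [primitive, show 2 * (π / 6) = π / 3 by ring, sin_pi_div_three, cos_pi_div_three,
    mul_zero, sin_zero, div_pow, r3, r3', r5]
  ring
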